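/- Let α be a type and let A, B be lists over α, both of length 2. Let n ≥ 2 and let i be an integer with 1 ≤ i ≤ 2^{n−1}. Set k' = 6·2^{n−2} + i − 1 and k'' = 6·2^{n−2} − i + 1. Then |S_{A,B}(k'+1)| = 2·d(k'+1) + 2·d(k''), i.e., |S(k'+1)|/2 − d(k'+1) = d(k''), where d is Stern's diatomic sequence. -/

import Mathlib

/-- Stern's diatomic sequence. -/
def stern : ℕ → ℕ
  | 0 => 0
  | 1 => 1
  | n + 2 =>
    if (n + 2) % 2 = 0 then stern ((n + 2) / 2)
    else stern ((n + 2) / 2) + stern ((n + 2) / 2 + 1)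
decreasing_by all_goals omega

/-- OEIS A003602: a(1)=1, a(2n)=a(n), a(2n+1)=n+1. (a(0)=0 as junk value.) -/
def aseq : ℕ → ℕ
  | 0 => 0
  | 1 => 1
  | n + 2 =>
    if (n + 2) % 2 = 0 then aseq ((n + 2) / 2)
    else (n + 2) / 2 + 1
decreasing_by all_goals omega

-- the modified sequence `a*`: zero at powers of two.
open Classical in
noncomputable def aStar (j : ℕ) : ℕ :=
  if ∃ k, j = 2 ^ k then 0 else aseq j

theorem aseq_le (n : ℕ) : aseq n ≤ n := by
  induction n using Nat.strong_induction_on with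
  | _ n ih =>
    match n with
    | 0 => simp [aseq]
    | 1 => simp [aseq]
    | m + 2 =>
      rw [aseq]
      split
      · exact le_trans (ih ((m + 2) / 2) (by omega)) (by omega)
      · omega

theorem aStar_le (j : ℕ) : aStar j ≤ j := by
  unfold aStar
  split
  · omega
  · exact aseq_le j

/-- The Markov-type sequence `S_{A,B}(n)`. -/
noncomputable def mseq {α : Type*} (A B : List α) : ℕ → List α
  | 0 => A
  | 1 => B
  | 2 => A ++ B
  | n + 3 =>
    if (n + 3) % 2 = 0 then
      mseq A B ((n + 3) / 2) ++ mseq A B (aseq ((n + 3) / 2))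
    else
      mseq A B (aStar ((n + 4) / 2 - 1)) ++ mseq A B ((n + 4) / 2)
decreasing_by
  all_goals first
    | omega
    | exact lt_of_le_of_lt (aseq_le _) (by omega)
    | exact lt_of_le_of_lt (aStar_le _) (by omega)

theorem stern_even (n : ℕ) : stern (2 * n) = stern n := by
  rcases n with _ | n
  · rfl
  · rw [show 2 * (n + 1) = 2 * n + 2 by ring, stern, if_pos (by omega)]
    congr 1; omega

theorem stern_odd (n : ℕ) : stern (2 * n + 1) = stern n + stern (n + 1) := by
  rcases n with _ | n
  · simp [stern]
  · rw [show 2 * (n + 1) + 1 = (2 * n + 1) + 2 by ring, stern, if_neg (by omega)]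
    congr 2 <;> omega

theorem aseq_even (n : ℕ) : aseq (2 * n) = aseq n := by
  rcases n with _ | n
  · rfl
  · rw [show 2 * (n + 1) = 2 * n + 2 by ring, aseq, if_pos (by omega)]
    congr 1; omega

theorem aseq_odd (n : ℕ) : aseq (2 * n + 1) = n + 1 := by
  rcases n with _ | n
  · simp [aseq]
  · rw [show 2 * (n + 1) + 1 = (2 * n + 1) + 2 by ring, aseq, if_neg (by omega)]
    omega

theorem aseq_two_pow (k : ℕ) : aseq (2 ^ k) = 1 := by
  induction k with
  | zero => simp [aseq]
  | succ k ih => rw [pow_succ, mul_comm, aseq_even, ih]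

theorem len_aseq {α : Type*} (A B : List α) (N : ℕ)
    (h : ∀ m < N, (mseq A B (m + 1)).length = 2 * stern (m + 1) + 2 * stern m) :
    ∀ n, 1 ≤ n → n ≤ N → (mseq A B (aseq n)).length = 2 * stern n := by
  intro n
  induction n using Nat.strong_induction_on with
  | _ n ih =>
    intro h1 h2
    rcases Nat.even_or_odd' n with ⟨m, rfl | rfl⟩
    · rw [aseq_even, stern_even]
      exact ih m (by omega) (by omega) (by omega)
    · rw [aseq_odd, stern_odd, h m (by omega)]
      ring

theorem len_main {α : Type*} (A B : List α) (hA : A.length = 2) (hB : B.length = 2) (m : ℕ) :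
    (mseq A B (m + 1)).length = 2 * stern (m + 1) + 2 * stern m := by
  induction m using Nat.strong_induction_on with
  | _ m ih =>
    match m with
    | 0 => simp [mseq, stern, hB]
    | 1 => simp [mseq, stern, hA, hB]
    | n + 2 =>
      have ha := len_aseq A B (n + 2) ih
      rw [show n + 2 + 1 = n + 3 by ring, mseq]
      rcases Nat.even_or_odd' n with ⟨p, rfl | rfl⟩
      · rw [if_neg (by omega), List.length_append,
          show (2 * p + 4) / 2 - 1 = p + 1 by omega, show (2 * p + 4) / 2 = p + 1 + 1 by omega,
          ih (p + 1) (by omega), show 2 * p + 3 = 2 * (p + 1) + 1 by ring,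
          show 2 * p + 2 = 2 * (p + 1) by ring, stern_odd, stern_even]
        have : (mseq A B (aStar (p + 1))).length = 2 * stern (p + 1) := by
          rw [← ha (p + 1) (by omega) (by omega), aStar]
          split
          · rename_i hk
            obtain ⟨k, hk⟩ := hk
            rw [hk, aseq_two_pow]
            simp [mseq, hA, hB]
          · rfl
        rw [this]; ring
      · rw [if_pos (by omega), List.length_append,
          show (2 * p + 1 + 3) / 2 = p + 1 + 1 by omega,
          ih (p + 1) (by omega), ha (p + 1 + 1) (by omega) (by omega),
          show 2 * p + 1 + 3 = 2 * (p + 1 + 1) by ring,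
          show 2 * p + 1 + 2 = 2 * (p + 1) + 1 by ring, stern_odd, stern_even]
        ring

theorem stern_symm (m : ℕ) : ∀ t, t ≤ 2 * 2 ^ m →
    stern (6 * 2 ^ m + t) = stern (6 * 2 ^ m - t) := by
  induction m with
  | zero =>
    intro t ht
    have : t = 0 ∨ t = 1 ∨ t = 2 := by omega
    rcases this with rfl | rfl | rfl <;> simp [stern]
  | succ m ih =>
    intro t ht
    rw [pow_succ] at *
    generalize 2 ^ m = P at *
    rcases Nat.even_or_odd' t with ⟨u, rfl | rfl⟩
    · rw [show 6 * (P * 2) + 2 * u = 2 * (6 * P + u) by ring,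
        show 6 * (P * 2) - 2 * u = 2 * (6 * P - u) by omega, stern_even, stern_even,
        ih u (by omega)]
    · rw [show 6 * (P * 2) + (2 * u + 1) = 2 * (6 * P + u) + 1 by ring,
        show 6 * (P * 2) - (2 * u + 1) = 2 * (6 * P - (u + 1)) + 1 by omega, stern_odd, stern_odd,
        show 6 * P - (u + 1) + 1 = 6 * P - u by omega, ih u (by omega),
        show 6 * P + u + 1 = 6 * P + (u + 1) by ring, ih (u + 1) (by omega)]
      ring

/-- for `A`, `B` of length 2, `n ≥ 2`, `1 ≤ i ≤ 2^{n−1}`,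
`k' = 6·2^{n−2} + i − 1` and `k'' = 6·2^{n−2} − i + 1`, one has
`|S_{A,B}(k'+1)| = 2·d(k'+1) + 2·d(k'')`. -/
theorem stmt10 {α : Type*} (A B : List α) (hA : A.length = 2) (hB : B.length = 2)
    (n i : ℕ) (hn : 2 ≤ n) (hi1 : 1 ≤ i) (hi2 : i ≤ 2 ^ (n - 1)) :
    (mseq A B ((6 * 2 ^ (n - 2) + i - 1) + 1)).length =
      2 * stern ((6 * 2 ^ (n - 2) + i - 1) + 1) + 2 * stern (6 * 2 ^ (n - 2) - i + 1) := by
  obtain ⟨m, rfl⟩ : ∃ m, n = m + 2 := ⟨n - 2, by omega⟩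
  have e : 2 ^ (m + 2 - 1) = 2 * 2 ^ m := by
    rw [show m + 2 - 1 = m + 1 by omega, pow_succ, mul_comm]
  rw [e] at hi2
  rw [show m + 2 - 2 = m by omega, len_main A B hA hB]
  have h := stern_symm m (i - 1) (by omega)
  rw [show 6 * 2 ^ m + i - 1 = 6 * 2 ^ m + (i - 1) by omega,
    show 6 * 2 ^ m - i + 1 = 6 * 2 ^ m - (i - 1) by omega, h]
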